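/- arXiv:2407.00687 — 4 statements merged into one kernel-verified Lean document; each statement's English description precedes it below -/
import Mathlib

section
/- Assume Ag contains at least two distinct agents a and b. Then the scheme C_Gφ → F_Gφ is not valid on similarity models: there exist a formula φ (e.g., a propositional variable p), a group G = {a,b}, a similarity model M and a state s of M such that M,s ⊨ C_Gφ but M,s ⊭ F_Gφ. -/
/-- Formulas of the language ELCDF over a set `Ag` of agents, with propositional
variables drawn from the countably infinite set `ℕ`.  Groups are nonempty
finite sets of agents. -/
inductive Formula (Ag : Type) : Type
  | atom : ℕ → Formula Ag
  | neg  : Formula Ag → Formula Ag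
  | impl : Formula Ag → Formula Ag → Formula Ag
  | K    : Ag → Formula Ag → Formula Ag
  | C    : (G : Finset Ag) → G.Nonempty → Formula Ag → Formula Ag
  | D    : (G : Finset Ag) → G.Nonempty → Formula Ag → Formula Ag
  | F    : (G : Finset Ag) → G.Nonempty → Formula Ag → Formula Ag

/-- A similarity model `(W, A, E, C, ν)`. -/
structure SimModel (Ag : Type) where
  W : Type
  A : Type
  w_nonempty : Nonempty W
  E : W → W → Set A
  Cap : Ag → Set A
  val : W → Set ℕ
  positivity : ∀ s t : W, E s t = Set.univ → s = t
  symmetry : ∀ s t : W, E s t = E t s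

/-- Satisfaction on similarity models.  The clause for common knowledge
`C_G ψ` ("`E_G^n ψ` holds for every positive integer `n`") is rendered as:
`ψ` holds at every state reachable from `s` by a nonempty finite chain of
`G`-edges (a step from `u` to `v` being possible when `C(a) ⊆ E(u,v)` for
some `a ∈ G`), which is exactly the same condition. -/
def SimModel.sat {Ag : Type} (M : SimModel Ag) : M.W → Formula Ag → Prop
  | s, .atom p => p ∈ M.val s
  | s, .neg φ => ¬ M.sat s φ
  | s, .impl φ ψ => M.sat s φ → M.sat s ψ
  | s, .K a φ => ∀ t, M.Cap a ⊆ M.E s t → M.sat t φ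
  | s, .C G _ φ =>
      ∀ t, Relation.TransGen (fun u v => ∃ a ∈ G, M.Cap a ⊆ M.E u v) s t → M.sat t φ
  | s, .D G _ φ => ∀ t, (⋃ a ∈ G, M.Cap a) ⊆ M.E s t → M.sat t φ
  | s, .F G _ φ => ∀ t, (⋂ a ∈ G, M.Cap a) ⊆ M.E s t → M.sat t φ

/-- Validity on similarity models. -/
def Valid {Ag : Type} (φ : Formula Ag) : Prop :=
  ∀ (M : SimModel Ag) (s : M.W), M.sat s φ

/-! Let every agent own a private ability and let distinct states be completely dissimilar.
Each agent then distinguishes all states, so common knowledge collapses to truth at the current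
state. Two agents share no ability, so field knowledge collapses to truth at every state. -/

namespace SimModel

variable {Ag W A : Type}

section

variable {M : SimModel Ag} {s : M.W} {G : Finset Ag} {φ : Formula Ag}

theorem sat_F_iff_forall_of_iInter_Cap_eq_empty (hG : G.Nonempty)
    (hCap : ⋂ a ∈ G, M.Cap a = ∅) : M.sat s (.F G hG φ) ↔ ∀ t, M.sat t φ := by
  simp only [sat, hCap, Set.empty_subset, true_imp_iff]

theorem sat_C_iff_of_Cap_subset_E_iff (hG : G.Nonempty)
    (hE : ∀ a ∈ G, ∀ u v, M.Cap a ⊆ M.E u v ↔ u = v) : M.sat s (.C G hG φ) ↔ M.sat s φ := by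
  have step_eq : (fun u v => ∃ a ∈ G, M.Cap a ⊆ M.E u v) = Eq := by
    ext u v
    constructor
    · rintro ⟨a, ha, hsub⟩
      exact (hE a ha u v).mp hsub
    · intro huv
      obtain ⟨a, ha⟩ := hG
      exact ⟨a, ha, (hE a ha u v).mpr huv⟩
  simp only [sat, step_eq, Relation.transGen_eq_self, forall_eq']

end

/-- The similarity model in which a state shares every ability with itself and none with any other
state: `E s t` is `Set.univ` if `s = t` and `∅` otherwise. -/
def discrete [Nonempty W] [Nonempty A] (Cap : Ag → Set A) (val : W → Set ℕ) : SimModel Ag where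
  W := W
  A := A
  w_nonempty := inferInstance
  E s t := {_x | s = t}
  Cap := Cap
  val := val
  positivity s t h := Set.eq_univ_iff_forall.mp h (Classical.arbitrary A)
  symmetry s t := by simp only [eq_comm]

variable [Nonempty W] [Nonempty A] {Cap : Ag → Set A} {val : W → Set ℕ}

theorem discrete_Cap_subset_E_iff {a : Ag} (ha : (Cap a).Nonempty) (s t : W) :
    (discrete Cap val).Cap a ⊆ (discrete Cap val).E s t ↔ s = t :=
  ⟨fun h => h ha.some_mem, fun h _ _ => h⟩

end SimModel

theorem iInter_singleton_eq_empty_of_nontrivial {α : Type*} {s : Finset α} (hs : s.Nontrivial) :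
    ⋂ a ∈ s, ({a} : Set α) = ∅ := by
  obtain ⟨a, ha, b, hb, hab⟩ := hs
  refine Set.eq_empty_of_forall_notMem fun x hx => hab ?_
  have eq_of_mem : ∀ c ∈ s, x = c := Set.mem_iInter₂.mp hx
  exact (eq_of_mem a ha).symm.trans (eq_of_mem b hb)

theorem stmt_10_general {Ag : Type} {G : Finset Ag} (hG : G.Nontrivial) (p : ℕ) :
    ∃ (M : SimModel Ag) (s : M.W),
      M.sat s (.C G hG.nonempty (.atom p)) ∧ ¬ M.sat s (.F G hG.nonempty (.atom p)) := by
  have : Nonempty Ag := hG.nonempty.to_type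
  let M : SimModel Ag := .discrete (fun a => {a}) fun s : Bool => {_n | s = true}
  refine ⟨M, true, ?_, fun hF => ?_⟩
  · have sat_true : M.sat true (.atom p) := rfl
    have distinguishes : ∀ a ∈ G, ∀ u v, M.Cap a ⊆ M.E u v ↔ u = v := fun a _ =>
      SimModel.discrete_Cap_subset_E_iff (W := Bool) (Set.singleton_nonempty a)
    exact (SimModel.sat_C_iff_of_Cap_subset_E_iff _ distinguishes).mpr sat_true
  · have sat_forall : ∀ t, M.sat t (.atom p) :=
      (SimModel.sat_F_iff_forall_of_iInter_Cap_eq_empty _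
        (iInter_singleton_eq_empty_of_nontrivial hG)).mp hF
    exact Bool.false_ne_true (sat_forall false)

/-- if `Ag` contains two distinct agents `a` and `b`, then the
scheme `C_Gφ → F_Gφ` is not valid: for `G = {a,b}` there are a formula `φ`, a
similarity model `M` and a state `s` with `M,s ⊨ C_Gφ` but `M,s ⊭ F_Gφ`. -/
theorem stmt_10 {Ag : Type} [Fintype Ag] [Nonempty Ag] [DecidableEq Ag]
    (a b : Ag) (hab : a ≠ b) :
    ∃ (φ : Formula Ag) (M : SimModel Ag) (s : M.W),
      M.sat s (Formula.C {a, b} (Finset.insert_nonempty a {b}) φ) ∧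
      ¬ M.sat s (Formula.F {a, b} (Finset.insert_nonempty a {b}) φ) :=
  ⟨.atom 0, stmt_10_general ⟨a, by simp, b, by simp, hab⟩ 0⟩
end

section
/- Assume Ag contains at least two distinct agents a and b. Then the scheme D_Gφ → K_aφ with a ∈ G is not valid on similarity models: there exist a formula φ, a group G = {a,b}, a similarity model M and a state s of M such that M,s ⊨ D_Gφ but M,s ⊭ K_aφ. -/
/-! If `b` can tell all states apart and `a` has no abilities, then any group containing `b` has
distributed knowledge of every truth, whereas `a` knows only what holds at all states. -/

namespace SimModel

variable {Ag : Type}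

section

variable {M : SimModel Ag} {s : M.W} {φ : Formula Ag}

theorem sat_K_iff_forall_of_cap_eq_empty {a : Ag} (ha : M.Cap a = ∅) :
    M.sat s (.K a φ) ↔ ∀ t, M.sat t φ := by
  simp only [sat, ha, Set.empty_subset, forall_const]

theorem eq_of_iUnion_cap_subset_E {G : Finset Ag} {b : Ag} (hbG : b ∈ G)
    (hb : M.Cap b = Set.univ) {t : M.W} (h : (⋃ c ∈ G, M.Cap c) ⊆ M.E s t) : s = t :=
  M.positivity s t <| Set.univ_subset_iff.mp <|
    hb ▸ (Set.subset_biUnion_of_mem (u := M.Cap) hbG).trans h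

theorem sat_D_of_sat_of_cap_eq_univ {G : Finset Ag} {b : Ag} (hG : G.Nonempty) (hbG : b ∈ G)
    (hb : M.Cap b = Set.univ) (hφ : M.sat s φ) : M.sat s (.D G hG φ) := by
  intro t ht
  exact eq_of_iUnion_cap_subset_E hbG hb ht ▸ hφ

end

/-- The similarity model on `W` with a single ability, possessed by `b` alone, which tells any two
distinct states apart: `b` can distinguish everything and every other agent nothing. -/
def soleExpert {W : Type} [Nonempty W] (b : Ag) (val : W → Set ℕ) : SimModel Ag where
  W := W
  A := Unit
  w_nonempty := inferInstance
  E s t := {_x | s = t}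
  Cap c := {_x | c = b}
  val := val
  positivity _ _ h := Set.eq_univ_iff_forall.mp h ()
  symmetry _ _ := Set.ext fun _ => eq_comm

section

variable {W : Type} [Nonempty W] {b : Ag} {val : W → Set ℕ}

theorem cap_soleExpert_self : (soleExpert b val).Cap b = Set.univ :=
  Set.eq_univ_of_forall fun _ => rfl

theorem cap_soleExpert_of_ne {a : Ag} (hab : a ≠ b) : (soleExpert b val).Cap a = ∅ :=
  Set.eq_empty_of_forall_notMem fun _ => hab

end

end SimModel

theorem stmt_11_general {Ag : Type} {a b : Ag} {G : Finset Ag} (hG : G.Nonempty)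
    (hbG : b ∈ G) (hab : a ≠ b) :
    ∃ (φ : Formula Ag) (M : SimModel Ag) (s : M.W),
      M.sat s (.D G hG φ) ∧ ¬ M.sat s (.K a φ) := by
  let M : SimModel Ag := .soleExpert b fun w : Bool => {_p | w = true}
  refine ⟨.atom 0, M, true, ?_, ?_⟩
  · have sat_true : M.sat true (.atom 0) := rfl
    have cap_b : M.Cap b = Set.univ := SimModel.cap_soleExpert_self
    exact SimModel.sat_D_of_sat_of_cap_eq_univ hG hbG cap_b sat_true
  · have not_sat_false : ¬ M.sat false (.atom 0) := Bool.false_ne_true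
    have cap_a : M.Cap a = ∅ := SimModel.cap_soleExpert_of_ne hab
    exact fun h => not_sat_false (SimModel.sat_K_iff_forall_of_cap_eq_empty cap_a |>.mp h false)

/-- if `Ag` contains two distinct agents `a` and `b`, then the
scheme `D_Gφ → K_aφ` (with `a ∈ G`) is not valid: for `G = {a,b}` there are a
formula `φ`, a similarity model `M` and a state `s` with `M,s ⊨ D_Gφ` but
`M,s ⊭ K_aφ`. -/
theorem stmt_11 {Ag : Type} [Fintype Ag] [Nonempty Ag] [DecidableEq Ag]
    (a b : Ag) (hab : a ≠ b) :
    ∃ (φ : Formula Ag) (M : SimModel Ag) (s : M.W),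
      M.sat s (Formula.D {a, b} (Finset.insert_nonempty a {b}) φ) ∧
      ¬ M.sat s (Formula.K a φ) := by
  exact stmt_11_general _ (by simp) hab
end

section
/- Soundness of ELCDF: every formula derivable in the axiomatic system ELCDF is valid on similarity models, i.e., if ⊢_ELCDF φ then M,s ⊨ φ for every similarity model M and every state s of M. -/
namespace Formula
/-- Conjunction, defined from the primitive connectives. -/
def and {Ag : Type} (φ ψ : Formula Ag) : Formula Ag := .neg (φ.impl ψ.neg)
/-- A fixed tautology. -/
def top {Ag : Type} : Formula Ag := (atom 0).impl (atom 0)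
/-- Biconditional, defined from the primitive connectives. -/
def iff {Ag : Type} (φ ψ : Formula Ag) : Formula Ag := (φ.impl ψ).and (ψ.impl φ)
end Formula

/-- The conjunction `⋀_{a ∈ G} f a`. -/
noncomputable def bigConj {Ag : Type} (G : Finset Ag) (f : Ag → Formula Ag) : Formula Ag :=
  (G.toList.map f).foldr Formula.and Formula.top

/-- `φ` is a propositional tautology: it evaluates to `true` under every
assignment of truth values to formulas that respects negation and implication
(thereby treating atoms and modal formulas as propositional atoms). -/
def IsTautology {Ag : Type} (φ : Formula Ag) : Prop :=
  ∀ v : Formula Ag → Bool,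
    (∀ ψ : Formula Ag, v ψ.neg = !v ψ) →
    (∀ ψ χ : Formula Ag, v (ψ.impl χ) = (!v ψ || v χ)) →
    v φ = true

/-- The axiomatic system ELCDF: the least set of formulas containing all
propositional tautologies, closed under modus ponens and necessitation for
each `K_a`, and containing the axiom schemes K, B, C1 (with the rule C2),
KD, D1, D2, BD, KF, F1, F2, BF, and closed under the rule NF. -/
inductive Prov {Ag : Type} : Formula Ag → Prop
  | taut {φ : Formula Ag} : IsTautology φ → Prov φ
  | mp {φ ψ : Formula Ag} : Prov (φ.impl ψ) → Prov φ → Prov ψ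
  | nec {φ : Formula Ag} (a : Ag) : Prov φ → Prov (.K a φ)
  | kK {φ ψ : Formula Ag} (a : Ag) :
      Prov ((Formula.K a (φ.impl ψ)).impl ((Formula.K a φ).impl (.K a ψ)))
  | axB {φ : Formula Ag} (a : Ag) :
      Prov (φ.impl (.K a (Formula.neg (.K a φ.neg))))
  | c1 {φ : Formula Ag} (G : Finset Ag) (hG : G.Nonempty) :
      Prov ((Formula.C G hG φ).impl
        (bigConj G fun a => .K a (φ.and (.C G hG φ))))
  | c2 {φ ψ : Formula Ag} (G : Finset Ag) (hG : G.Nonempty) :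
      Prov (φ.impl (bigConj G fun a => .K a (φ.and ψ))) →
      Prov (φ.impl (.C G hG ψ))
  | kD {φ ψ : Formula Ag} (G : Finset Ag) (hG : G.Nonempty) :
      Prov ((Formula.D G hG (φ.impl ψ)).impl ((Formula.D G hG φ).impl (.D G hG ψ)))
  | d1 {φ : Formula Ag} (a : Ag) :
      Prov ((Formula.D {a} (Finset.singleton_nonempty a) φ).iff (.K a φ))
  | d2 {φ : Formula Ag} (G H : Finset Ag) (hG : G.Nonempty) (hH : H.Nonempty)
      (hGH : G ⊆ H) : Prov ((Formula.D G hG φ).impl (.D H hH φ))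
  | bd {φ : Formula Ag} (G : Finset Ag) (hG : G.Nonempty) :
      Prov (φ.impl (.D G hG (Formula.neg (.D G hG φ.neg))))
  | kF {φ ψ : Formula Ag} (G : Finset Ag) (hG : G.Nonempty) :
      Prov ((Formula.F G hG (φ.impl ψ)).impl ((Formula.F G hG φ).impl (.F G hG ψ)))
  | f1 {φ : Formula Ag} (a : Ag) :
      Prov ((Formula.F {a} (Finset.singleton_nonempty a) φ).iff (.K a φ))
  | f2 {φ : Formula Ag} (G H : Finset Ag) (hG : G.Nonempty) (hH : H.Nonempty)
      (hHG : H ⊆ G) : Prov ((Formula.F G hG φ).impl (.F H hH φ))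
  | bf {φ : Formula Ag} (G : Finset Ag) (hG : G.Nonempty) :
      Prov (φ.impl (.F G hG (Formula.neg (.F G hG φ.neg))))
  | nf {φ : Formula Ag} (G : Finset Ag) (hG : G.Nonempty) :
      Prov φ → Prov (.F G hG φ)

/-!
Each modality is a box along a relation between states: `K_a`, `D_G` and `F_G` along "the abilities
in `B` cannot tell `s` from `t`" for a set `B` of abilities, and `C_G` along the transitive closure
of the union of the relations of `K_a`, `a ∈ G`. Symmetry of `E` makes the former relations
symmetric, which gives the B axioms, and they shrink as `B` grows, which gives D2 and F2. The axiom
C1 and the rule C2 are the unfolding and the induction principle of the transitive closure.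
-/

/-- The necessity operator of the relation `R`, acting on predicates on states: the common semantic
form of all the modalities of ELCDF. -/
def Box {W : Type*} (R : W → W → Prop) (P : W → Prop) (s : W) : Prop :=
  ∀ t, R s t → P t

namespace Box

variable {W : Type*} {R R' : W → W → Prop} {P Q : W → Prop} {s : W}

theorem imp (hPQ : Box R (fun t => P t → Q t) s) (hP : Box R P s) : Box R Q s :=
  fun t hst => hPQ t hst (hP t hst)

theorem of_forall (hP : ∀ t, P t) : Box R P s :=
  fun t _ => hP t

theorem anti (hR : R' ≤ R) (hP : Box R P s) : Box R' P s :=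
  fun t hst => hP t (hR s t hst)

theorem not_box_not [Std.Symm R] (hP : P s) :
    Box R (fun t => ¬ Box R (fun u => ¬ P u) t) s :=
  fun _ hst hbox => hbox s (symm_of R hst) hP

theorem and_transGen (hP : Box (Relation.TransGen R) P s) :
    Box R (fun t => P t ∧ Box (Relation.TransGen R) P t) s :=
  fun t hst => ⟨hP t (.single hst), fun u htu => hP u (.head hst htu)⟩

theorem transGen_of_invariant (hinv : ∀ t, P t → Box R (fun u => P u ∧ Q u) t) (hP : P s) :
    Box (Relation.TransGen R) Q s := by
  intro t hst
  suffices hPQ : P t ∧ Q t from hPQ.2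
  induction hst with
  | single hsu => exact hinv _ hP _ hsu
  | tail _ huv ih => exact hinv _ ih.1 _ huv

end Box

namespace SimModel

variable {Ag : Type} (M : SimModel Ag)

/-- Indistinguishability of states by the set `B` of abilities, all of which must fail to separate
them; `K_a`, `D_G` and `F_G` take `B` to be `C(a)`, `⋃_{a ∈ G} C(a)` and `⋂_{a ∈ G} C(a)`. -/
def Indist (B : Set M.A) (s t : M.W) : Prop :=
  B ⊆ M.E s t

/-- The accessibility relation of "everybody in `G` knows": some agent of `G` cannot distinguish the
two states. Its transitive closure interprets `C_G`. -/
def GroupStep (G : Finset Ag) (s t : M.W) : Prop :=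
  ∃ a ∈ G, M.Indist (M.Cap a) s t

instance indist_symm (B : Set M.A) : Std.Symm (M.Indist B) :=
  ⟨fun s t hst => hst.trans (M.symmetry s t).subset⟩

theorem indist_antitone : Antitone M.Indist :=
  fun _ _ hB _ _ hst => hB.trans hst

theorem box_groupStep {G : Finset Ag} {P : M.W → Prop} {s : M.W} :
    Box (M.GroupStep G) P s ↔ ∀ a ∈ G, Box (M.Indist (M.Cap a)) P s :=
  ⟨fun hP a ha t hst => hP t ⟨a, ha, hst⟩, fun hP t ⟨a, ha, hst⟩ => hP a ha t hst⟩

variable {M} {s : M.W} {φ ψ : Formula Ag}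

theorem sat_neg : M.sat s φ.neg ↔ ¬ M.sat s φ :=
  Iff.rfl

theorem sat_impl : M.sat s (φ.impl ψ) ↔ (M.sat s φ → M.sat s ψ) :=
  Iff.rfl

theorem sat_K {a : Ag} : M.sat s (.K a φ) ↔ Box (M.Indist (M.Cap a)) (M.sat · φ) s :=
  Iff.rfl

theorem sat_C {G : Finset Ag} {hG : G.Nonempty} :
    M.sat s (.C G hG φ) ↔ Box (Relation.TransGen (M.GroupStep G)) (M.sat · φ) s :=
  Iff.rfl

theorem sat_D {G : Finset Ag} {hG : G.Nonempty} :
    M.sat s (.D G hG φ) ↔ Box (M.Indist (⋃ a ∈ G, M.Cap a)) (M.sat · φ) s :=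
  Iff.rfl

theorem sat_F {G : Finset Ag} {hG : G.Nonempty} :
    M.sat s (.F G hG φ) ↔ Box (M.Indist (⋂ a ∈ G, M.Cap a)) (M.sat · φ) s :=
  Iff.rfl

theorem sat_and : M.sat s (φ.and ψ) ↔ M.sat s φ ∧ M.sat s ψ := by
  simp only [Formula.and, sat_neg, sat_impl, Classical.not_imp, not_not]

theorem sat_iff : M.sat s (φ.iff ψ) ↔ (M.sat s φ ↔ M.sat s ψ) :=
  sat_and.trans iff_iff_implies_and_implies.symm

theorem sat_foldr_and {l : List (Formula Ag)} :
    M.sat s (l.foldr Formula.and Formula.top) ↔ ∀ φ ∈ l, M.sat s φ := by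
  induction l with
  | nil => simp [Formula.top, sat]
  | cons φ l ih => simp [sat_and, ih]

theorem sat_bigConj {G : Finset Ag} {f : Ag → Formula Ag} :
    M.sat s (bigConj G f) ↔ ∀ a ∈ G, M.sat s (f a) := by
  simp [bigConj, sat_foldr_and]

theorem sat_bigConj_K {G : Finset Ag} :
    M.sat s (bigConj G fun a => .K a φ) ↔ Box (M.GroupStep G) (M.sat · φ) s :=
  sat_bigConj.trans M.box_groupStep.symm

theorem sat_D_singleton {a : Ag} :
    M.sat s (.D {a} (Finset.singleton_nonempty a) φ) ↔ M.sat s (.K a φ) := by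
  rw [sat_D, sat_K, Finset.set_biUnion_singleton]

theorem sat_F_singleton {a : Ag} :
    M.sat s (.F {a} (Finset.singleton_nonempty a) φ) ↔ M.sat s (.K a φ) := by
  rw [sat_F, sat_K, Finset.set_biInter_singleton]

theorem sat_D_mono {G H : Finset Ag} {hG : G.Nonempty} {hH : H.Nonempty} (hGH : G ⊆ H)
    (h : M.sat s (.D G hG φ)) : M.sat s (.D H hH φ) :=
  Box.anti (M.indist_antitone (Set.biUnion_subset_biUnion_left hGH)) h

theorem sat_F_anti {G H : Finset Ag} {hG : G.Nonempty} {hH : H.Nonempty} (hHG : H ⊆ G)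
    (h : M.sat s (.F G hG φ)) : M.sat s (.F H hH φ) :=
  Box.anti (M.indist_antitone (Set.biInter_subset_biInter_left hHG)) h

theorem sat_bigConj_K_and_C {G : Finset Ag} {hG : G.Nonempty} (h : M.sat s (.C G hG φ)) :
    M.sat s (bigConj G fun a => .K a (φ.and (.C G hG φ))) := by
  simp only [sat_bigConj_K, sat_and, sat_C] at h ⊢
  exact h.and_transGen

theorem sat_C_of_invariant {G : Finset Ag} {hG : G.Nonempty}
    (hinv : ∀ t, M.sat t φ → M.sat t (bigConj G fun a => .K a (φ.and ψ))) (h : M.sat s φ) :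
    M.sat s (.C G hG ψ) := by
  simp only [sat_bigConj_K, sat_and] at hinv
  exact Box.transGen_of_invariant hinv h

end SimModel

open Classical in
theorem IsTautology.valid {Ag : Type} {φ : Formula Ag} (h : IsTautology φ) : Valid φ := by
  intro M s
  have hφ : decide (M.sat s φ) = true := h (fun ψ => decide (M.sat s ψ))
    (fun ψ => by simp only [SimModel.sat_neg, decide_not])
    (fun ψ χ => by simp only [SimModel.sat_impl, imp_iff_not_or, Bool.decide_or, decide_not])
  exact of_decide_eq_true hφ

open SimModel in
theorem stmt_14_general {Ag : Type} {φ : Formula Ag} (h : Prov φ) : Valid φ := by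
  intro M s
  induction h generalizing s with
  | taut hφ => exact hφ.valid M s
  | mp _ _ ih_impl ih => exact ih_impl s (ih s)
  | nec _ _ ih => exact sat_K.mpr (Box.of_forall ih)
  | nf _ _ _ ih => exact sat_F.mpr (Box.of_forall ih)
  | kK | kD | kF =>
    simp only [sat_impl, sat_K, sat_D, sat_F]
    exact Box.imp
  | axB | bd | bf =>
    simp only [sat_impl, sat_neg, sat_K, sat_D, sat_F]
    exact Box.not_box_not (P := (M.sat · _))
  | c1 => exact sat_bigConj_K_and_C
  | c2 _ _ _ ih => exact sat_C_of_invariant ih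
  | d1 => exact sat_iff.mpr sat_D_singleton
  | d2 _ _ _ _ hGH => exact sat_D_mono hGH
  | f1 => exact sat_iff.mpr sat_F_singleton
  | f2 _ _ _ _ hHG => exact sat_F_anti hHG

/-- soundness of ELCDF: every theorem of the axiomatic system
ELCDF is valid on similarity models. -/
theorem stmt_14 {Ag : Type} [Fintype Ag] [Nonempty Ag]
    (φ : Formula Ag) (h : Prov φ) :
    ∀ (M : SimModel Ag) (s : M.W), M.sat s φ :=
  stmt_14_general h
end

section
/- Weak completeness of ELCDF: for every formula φ of the language ELCDF, if φ is valid on similarity models (satisfied at every state of every similarity model), then φ is a theorem of the axiomatic system ELCDF. -/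
/-!
A formula that is not a theorem is refuted in a similarity model built from maximal consistent
sets.  Its abilities are the finite sets of agents, an agent having the abilities it belongs to.
Whenever the abilities that one box `D_G` or `F_G` refers to are among those of another, the axioms
`D1`, `D2`, `F1`, `F2` derive the second box from the first.

Common knowledge is not compact, so accessibility is filtered through the subformulas of the given
formula: a property of maximal consistent sets that depends on finitely many formulas only is
itself defined by a formula, and the truth lemma for `C_G` follows by applying the rule `C2` to the
formula defining the states reachable through `G`.

Several boxes may relate the same two maximal consistent sets, and the union of their abilities
need not come from a single box.  The states are therefore unravelled into paths, where each pair is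
joined by at most one box.  The empty set of agents is an ability that no box refers to, so no two
states share all abilities and positivity holds.
-/

namespace Prov

variable {Ag : Type} {φ ψ χ : Formula Ag}

theorem impl_self : Prov (φ.impl φ) :=
  .taut fun v _ hv_impl => by simp [hv_impl]

theorem impl_impl_self : Prov (φ.impl (ψ.impl φ)) :=
  .taut fun v _ hv_impl => by cases h : v φ <;> simp [hv_impl, h]

theorem impl_distrib :
    Prov ((φ.impl (ψ.impl χ)).impl ((φ.impl ψ).impl (φ.impl χ))) :=
  .taut fun v _ hv_impl => by cases h : v φ <;> cases h' : v ψ <;> simp [hv_impl, h, h']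

theorem neg_impl_impl : Prov (φ.neg.impl (φ.impl ψ)) :=
  .taut fun v hv_neg hv_impl => by cases h : v φ <;> simp [hv_neg, hv_impl, h]

theorem impl_neg_neg : Prov (φ.impl φ.neg.neg) :=
  .taut fun v hv_neg hv_impl => by simp [hv_neg, hv_impl]

theorem by_cases : Prov ((φ.impl ψ).impl ((φ.neg.impl ψ).impl ψ)) :=
  .taut fun v hv_neg hv_impl => by
    cases h : v φ <;> cases h' : v ψ <;> simp [hv_neg, hv_impl, h, h']

end Prov

/-- The list of subformulas of a formula, itself included. -/
def Formula.subformulas {Ag : Type} : Formula Ag → List (Formula Ag)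
  | .atom p => [.atom p]
  | .neg φ => .neg φ :: φ.subformulas
  | .impl φ ψ => .impl φ ψ :: (φ.subformulas ++ ψ.subformulas)
  | .K a φ => .K a φ :: φ.subformulas
  | .C G hG φ => .C G hG φ :: φ.subformulas
  | .D G hG φ => .D G hG φ :: φ.subformulas
  | .F G hG φ => .F G hG φ :: φ.subformulas

theorem Formula.mem_subformulas_self {Ag : Type} (φ : Formula Ag) : φ ∈ φ.subformulas := by
  cases φ <;> simp [subformulas]

namespace ELCDF

variable {Ag : Type} {φ ψ : Formula Ag}

/-! ### Maximal consistent sets -/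

/-- A theory: a set of formulas that contains the theorems of ELCDF and is closed under modus
ponens.  The rules of necessitation are not imposed, since a theory collects what holds at a
single state. -/
structure IsTheory (T : Set (Formula Ag)) : Prop where
  mem_of_prov : ∀ {φ}, Prov φ → φ ∈ T
  mem_of_impl_mem : ∀ {φ ψ}, Formula.impl φ ψ ∈ T → φ ∈ T → ψ ∈ T

namespace IsTheory

theorem setOf_prov : IsTheory {φ : Formula Ag | Prov φ} :=
  ⟨id, Prov.mp⟩

variable {T : Set (Formula Ag)}

theorem mem_of_prov_impl (hT : IsTheory T) (h : Prov (φ.impl ψ)) (hφ : φ ∈ T) : ψ ∈ T :=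
  hT.mem_of_impl_mem (hT.mem_of_prov h) hφ

theorem setOf_impl_mem (hT : IsTheory T) (φ : Formula Ag) : IsTheory {ψ | φ.impl ψ ∈ T} where
  mem_of_prov h := hT.mem_of_prov (.mp .impl_impl_self h)
  mem_of_impl_mem h := hT.mem_of_impl_mem (hT.mem_of_prov_impl .impl_distrib h)

theorem sUnion {c : Set (Set (Formula Ag))} (hc : ∀ T ∈ c, IsTheory T)
    (hchain : IsChain (· ⊆ ·) c) (hne : c.Nonempty) : IsTheory (⋃₀ c) where
  mem_of_prov h := hne.imp fun T hT => ⟨hT, (hc T hT).mem_of_prov h⟩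
  mem_of_impl_mem := by
    rintro φ ψ ⟨S, hS, himpl⟩ ⟨T, hT, hφ⟩
    rcases hchain.total hS hT with hST | hTS
    · exact ⟨T, hT, (hc T hT).mem_of_impl_mem (hST himpl) hφ⟩
    · exact ⟨S, hS, (hc S hS).mem_of_impl_mem himpl (hTS hφ)⟩

theorem exists_maximal_notMem (hT : IsTheory T) (hφ : φ ∉ T) :
    ∃ S, T ⊆ S ∧ Maximal (fun S => IsTheory S ∧ φ ∉ S) S := by
  refine zorn_subset_nonempty {S | IsTheory S ∧ φ ∉ S} (fun c hc hchain hne => ?_) T ⟨hT, hφ⟩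
  refine ⟨⋃₀ c, ⟨sUnion (fun S hS => (hc hS).1) hchain hne, ?_⟩,
    fun _ => Set.subset_sUnion_of_mem⟩
  rintro ⟨S, hS, hφS⟩
  exact (hc hS).2 hφS

theorem impl_mem_of_maximal (hT : Maximal (fun S => IsTheory S ∧ φ ∉ S) T) (hψ : ψ ∉ T) :
    ψ.impl φ ∈ T := by
  have hTheory := hT.prop.1
  by_contra hψφ
  have hle : T ⊆ {χ | ψ.impl χ ∈ T} := fun χ => hTheory.mem_of_prov_impl .impl_impl_self
  have hge : {χ | ψ.impl χ ∈ T} ⊆ T := hT.le_of_ge ⟨hTheory.setOf_impl_mem ψ, hψφ⟩ hle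
  exact hψ (hge (hTheory.mem_of_prov .impl_self))

theorem neg_mem_iff_of_maximal (hT : Maximal (fun S => IsTheory S ∧ φ ∉ S) T)
    (ψ : Formula Ag) : ψ.neg ∈ T ↔ ψ ∉ T := by
  obtain ⟨hTheory, hφ⟩ := hT.prop
  constructor
  · intro hneg hψ
    exact hφ (hTheory.mem_of_impl_mem (hTheory.mem_of_prov_impl .neg_impl_impl hneg) hψ)
  · intro hψ
    by_contra hneg
    exact hφ (hTheory.mem_of_impl_mem
      (hTheory.mem_of_prov_impl .by_cases (impl_mem_of_maximal hT hψ))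
      (impl_mem_of_maximal hT hneg))

end IsTheory

/-- Maximal consistent sets, presented as the theories that contain exactly one of each formula and
its negation. -/
structure MCS (Ag : Type) where
  carrier : Set (Formula Ag)
  isTheory : IsTheory carrier
  neg_mem_carrier_iff : ∀ φ, Formula.neg φ ∈ carrier ↔ φ ∉ carrier

instance : SetLike (MCS Ag) (Formula Ag) where
  coe := MCS.carrier
  coe_injective := by
    rintro ⟨S, _, _⟩ ⟨T, _, _⟩ rfl
    rfl

theorem IsTheory.exists_mcs_notMem {T : Set (Formula Ag)} (hT : IsTheory T) (hφ : φ ∉ T) :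
    ∃ Γ : MCS Ag, T ⊆ Γ ∧ φ ∉ Γ := by
  obtain ⟨S, hTS, hS⟩ := hT.exists_maximal_notMem hφ
  exact ⟨⟨S, hS.prop.1, neg_mem_iff_of_maximal hS⟩, hTS, hS.prop.2⟩

theorem prov_of_forall_mem (h : ∀ Γ : MCS Ag, φ ∈ Γ) : Prov φ := by
  by_contra hφ
  obtain ⟨Γ, -, hΓ⟩ := IsTheory.setOf_prov.exists_mcs_notMem hφ
  exact hΓ (h Γ)

namespace MCS

variable (Γ : MCS Ag)

theorem mem_of_prov (h : Prov φ) : φ ∈ Γ :=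
  Γ.isTheory.mem_of_prov h

variable {Γ}

theorem mem_of_impl_mem (h : φ.impl ψ ∈ Γ) (hφ : φ ∈ Γ) : ψ ∈ Γ :=
  Γ.isTheory.mem_of_impl_mem h hφ

theorem mem_of_prov_impl (h : Prov (φ.impl ψ)) (hφ : φ ∈ Γ) : ψ ∈ Γ :=
  Γ.isTheory.mem_of_prov_impl h hφ

theorem neg_mem_iff : φ.neg ∈ Γ ↔ φ ∉ Γ :=
  Γ.neg_mem_carrier_iff φ

theorem impl_mem_iff : φ.impl ψ ∈ Γ ↔ (φ ∈ Γ → ψ ∈ Γ) := by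
  refine ⟨mem_of_impl_mem, fun h => ?_⟩
  by_cases hφ : φ ∈ Γ
  · exact mem_of_prov_impl .impl_impl_self (h hφ)
  · exact mem_of_prov_impl .neg_impl_impl (neg_mem_iff.2 hφ)

theorem and_mem_iff : φ.and ψ ∈ Γ ↔ φ ∈ Γ ∧ ψ ∈ Γ := by
  simp only [Formula.and, neg_mem_iff, impl_mem_iff, Classical.not_imp, not_not]

theorem iff_mem_iff : φ.iff ψ ∈ Γ ↔ (φ ∈ Γ ↔ ψ ∈ Γ) := by
  simp only [Formula.iff, and_mem_iff, impl_mem_iff, iff_iff_implies_and_implies]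

theorem top_mem : Formula.top ∈ Γ :=
  Γ.mem_of_prov .impl_self

theorem bigConj_mem_iff {G : Finset Ag} {f : Ag → Formula Ag} :
    bigConj G f ∈ Γ ↔ ∀ a ∈ G, f a ∈ Γ := by
  have foldr_mem_iff (l : List Ag) :
      (l.map f).foldr Formula.and Formula.top ∈ Γ ↔ ∀ a ∈ l, f a ∈ Γ := by
    induction l with
    | nil => simp [top_mem]
    | cons a l ih => simp [and_mem_iff, ih]
  simp [bigConj, foldr_mem_iff]

theorem D_singleton_mem_iff {a : Ag} :
    .D {a} (Finset.singleton_nonempty a) φ ∈ Γ ↔ .K a φ ∈ Γ :=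
  iff_mem_iff.1 (Γ.mem_of_prov (.d1 a))

theorem F_singleton_mem_iff {a : Ag} :
    .F {a} (Finset.singleton_nonempty a) φ ∈ Γ ↔ .K a φ ∈ Γ :=
  iff_mem_iff.1 (Γ.mem_of_prov (.f1 a))

theorem D_mem_of_subset {G H : Finset Ag} {hG : G.Nonempty} {hH : H.Nonempty} (hGH : G ⊆ H)
    (h : .D G hG φ ∈ Γ) : .D H hH φ ∈ Γ :=
  mem_of_prov_impl (.d2 G H hG hH hGH) h

theorem F_mem_of_subset {G H : Finset Ag} {hG : G.Nonempty} {hH : H.Nonempty} (hHG : H ⊆ G)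
    (h : .F G hG φ ∈ Γ) : .F H hH φ ∈ Γ :=
  mem_of_prov_impl (.f2 G H hG hH hHG) h

theorem D_mem_of_K_mem {G : Finset Ag} {hG : G.Nonempty} {a : Ag} (ha : a ∈ G)
    (h : .K a φ ∈ Γ) : .D G hG φ ∈ Γ :=
  D_mem_of_subset (Finset.singleton_subset_iff.2 ha) (D_singleton_mem_iff.2 h)

theorem K_mem_of_F_mem {G : Finset Ag} {hG : G.Nonempty} {a : Ag} (ha : a ∈ G)
    (h : .F G hG φ ∈ Γ) : .K a φ ∈ Γ :=
  F_singleton_mem_iff.1 (F_mem_of_subset (Finset.singleton_subset_iff.2 ha) h)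

theorem K_mem_of_C_mem {G : Finset Ag} {hG : G.Nonempty} {a : Ag} (ha : a ∈ G)
    (h : .C G hG φ ∈ Γ) : .K a (φ.and (.C G hG φ)) ∈ Γ :=
  bigConj_mem_iff.1 (mem_of_prov_impl (.c1 G hG) h) a ha

end MCS

/-! ### Modalities and their abilities -/

/-- The abilities of an agent in the canonical model.  An ability is a finite set of agents,
namely those that have it. -/
def capability (a : Ag) : Set (Finset Ag) := {T | a ∈ T}

/-- The normal modalities of the language: distributed knowledge `D_G` and field knowledge `F_G`.
Individual knowledge `K_a` is not a separate case, see `Modality.K`. -/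
inductive Modality (Ag : Type) : Type
  | D : (G : Finset Ag) → G.Nonempty → Modality Ag
  | F : (G : Finset Ag) → G.Nonempty → Modality Ag

namespace Modality

/-- Individual knowledge `K_a`, encoded as `D_{a}`. -/
def K (a : Ag) : Modality Ag := .D {a} (Finset.singleton_nonempty a)

/-- The formula obtained by prefixing a formula with a modality. -/
def box : Modality Ag → Formula Ag → Formula Ag
  | .D G hG => .D G hG
  | .F G hG => .F G hG

/-- The abilities two states of the canonical model must share for the modality to relate them. -/
def abilities : Modality Ag → Set (Finset Ag)
  | .D G _ => ⋃ a ∈ G, capability a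
  | .F G _ => ⋂ a ∈ G, capability a

theorem mem_abilities_D {G T : Finset Ag} {hG : G.Nonempty} :
    T ∈ (D G hG).abilities ↔ ∃ a ∈ G, a ∈ T := by
  simp [abilities, capability]

theorem mem_abilities_F {G T : Finset Ag} {hG : G.Nonempty} :
    T ∈ (F G hG).abilities ↔ G ⊆ T := by
  simp [abilities, capability, Finset.subset_iff]

theorem abilities_K (a : Ag) : (K a).abilities = capability a := by
  simp [K, abilities]

theorem abilities_nonempty (m : Modality Ag) : m.abilities.Nonempty := by
  cases m with
  | D G hG => exact ⟨G, mem_abilities_D.2 (hG.imp fun _ ha => ⟨ha, ha⟩)⟩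
  | F G hG => exact ⟨G, mem_abilities_F.2 subset_rfl⟩

theorem empty_notMem_abilities (m : Modality Ag) : ∅ ∉ m.abilities := by
  cases m with
  | D G hG => simp [mem_abilities_D]
  | F G hG => simpa [mem_abilities_F] using hG.ne_empty

theorem prov_box (m : Modality Ag) (h : Prov φ) : Prov (m.box φ) := by
  cases m with
  | D G hG =>
    obtain ⟨a, ha⟩ := id hG
    exact prov_of_forall_mem fun Γ => MCS.D_mem_of_K_mem ha (Γ.mem_of_prov (.nec a h))
  | F G hG => exact .nf G hG h

theorem prov_box_impl (m : Modality Ag) :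
    Prov ((m.box (φ.impl ψ)).impl ((m.box φ).impl (m.box ψ))) := by
  cases m with
  | D G hG => exact .kD G hG
  | F G hG => exact .kF G hG

theorem prov_impl_box_neg_box_neg (m : Modality Ag) :
    Prov (φ.impl (m.box (m.box φ.neg).neg)) := by
  cases m with
  | D G hG => exact .bd G hG
  | F G hG => exact .bf G hG

theorem box_K_mem_iff {Γ : MCS Ag} {a : Ag} : (K a).box φ ∈ Γ ↔ .K a φ ∈ Γ :=
  MCS.D_singleton_mem_iff

theorem box_mem_of_prov_impl {Γ : MCS Ag} {m : Modality Ag} (h : Prov (φ.impl ψ))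
    (hφ : m.box φ ∈ Γ) : m.box ψ ∈ Γ :=
  MCS.mem_of_impl_mem (MCS.mem_of_prov_impl m.prov_box_impl (Γ.mem_of_prov (m.prov_box h))) hφ

theorem isTheory_setOf_box_mem (m : Modality Ag) (Γ : MCS Ag) : IsTheory {φ | m.box φ ∈ Γ} where
  mem_of_prov h := Γ.mem_of_prov (m.prov_box h)
  mem_of_impl_mem h := MCS.mem_of_impl_mem (MCS.mem_of_prov_impl m.prov_box_impl h)

theorem box_mem_of_abilities_subset {Γ : MCS Ag} {m n : Modality Ag}
    (hmn : m.abilities ⊆ n.abilities) (h : m.box φ ∈ Γ) : n.box φ ∈ Γ := by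
  match m, n with
  | .D G _, .D H _ =>
    have hGH : G ⊆ H := fun a ha => by
      simpa [mem_abilities_D] using @hmn {a} (by simpa [mem_abilities_D] using ha)
    exact MCS.D_mem_of_subset hGH h
  | .D G hG, .F H hH =>
    have hH_eq (a) (ha : a ∈ G) : H = {a} := by
      rw [← hH.subset_singleton_iff, ← mem_abilities_F (hG := hH)]
      exact hmn (by simpa [mem_abilities_D] using ha)
    obtain ⟨a, ha⟩ := id hG
    obtain rfl := hH_eq a ha
    have hG_sub : G ⊆ {a} := fun b hb => by simpa using (hH_eq b hb).symm
    exact MCS.F_singleton_mem_iff.2 (MCS.D_singleton_mem_iff.1 (MCS.D_mem_of_subset hG_sub h))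
  | .F G _, .D H _ =>
    obtain ⟨a, haH, haG⟩ := mem_abilities_D.1 (hmn (mem_abilities_F.2 (Finset.Subset.refl G)))
    exact MCS.D_mem_of_K_mem haH (MCS.K_mem_of_F_mem haG h)
  | .F G _, .F H _ =>
    exact MCS.F_mem_of_subset
      (mem_abilities_F.1 (hmn (mem_abilities_F.2 (Finset.Subset.refl G)))) h

end Modality

/-! ### Accessibility and filtration -/

/-- The canonical accessibility relation of a modality between maximal consistent sets. -/
def Accessible (m : Modality Ag) (Γ Δ : MCS Ag) : Prop :=
  ∀ φ, m.box φ ∈ Γ → φ ∈ Δ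

theorem Accessible.symm {m : Modality Ag} {Γ Δ : MCS Ag} (h : Accessible m Γ Δ) :
    Accessible m Δ Γ := by
  intro φ hφ
  by_contra hφΓ
  have hΔ : (m.box φ.neg.neg).neg ∈ Δ :=
    h _ (MCS.mem_of_prov_impl m.prov_impl_box_neg_box_neg (MCS.neg_mem_iff.2 hφΓ))
  exact MCS.neg_mem_iff.1 hΔ (Modality.box_mem_of_prov_impl .impl_neg_neg hφ)

theorem Accessible.of_abilities_subset {m n : Modality Ag} {Γ Δ : MCS Ag}
    (h : Accessible n Γ Δ) (hmn : m.abilities ⊆ n.abilities) : Accessible m Γ Δ :=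
  fun φ hφ => h φ (Modality.box_mem_of_abilities_subset hmn hφ)

theorem exists_accessible_notMem {m : Modality Ag} {Γ : MCS Ag} (h : m.box φ ∉ Γ) :
    ∃ Δ, Accessible m Γ Δ ∧ φ ∉ Δ :=
  (m.isTheory_setOf_box_mem Γ).exists_mcs_notMem h

/-- Two maximal consistent sets agree on `L` if they contain the same members of `L`; this is the
equivalence relation of the filtration through `L`. -/
def AgreeOn (L : List (Formula Ag)) (Γ Δ : MCS Ag) : Prop :=
  ∀ φ ∈ L, (φ ∈ Γ ↔ φ ∈ Δ)

namespace AgreeOn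

variable {L : List (Formula Ag)} {Γ Δ Θ : MCS Ag}

theorem refl (L : List (Formula Ag)) (Γ : MCS Ag) : AgreeOn L Γ Γ :=
  fun _ _ => Iff.rfl

theorem symm (h : AgreeOn L Γ Δ) : AgreeOn L Δ Γ :=
  fun φ hφ => (h φ hφ).symm

theorem trans (h : AgreeOn L Γ Δ) (h' : AgreeOn L Δ Θ) : AgreeOn L Γ Θ :=
  fun φ hφ => (h φ hφ).trans (h' φ hφ)

theorem cons (hφ : φ ∈ Γ ↔ φ ∈ Δ) (h : AgreeOn L Γ Δ) : AgreeOn (φ :: L) Γ Δ :=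
  List.forall_mem_cons.2 ⟨hφ, h⟩

end AgreeOn

theorem exists_formula_mem_iff_of_agreeOn (L : List (Formula Ag)) {P : MCS Ag → Prop}
    (hP : ∀ Γ Δ, AgreeOn L Γ Δ → P Γ → P Δ) : ∃ χ : Formula Ag, ∀ Γ : MCS Ag, χ ∈ Γ ↔ P Γ := by
  induction L generalizing P with
  | nil =>
    have hconst (Γ Δ : MCS Ag) (h : P Γ) : P Δ := hP Γ Δ (by simp [AgreeOn]) h
    by_cases h : ∃ Γ, P Γ
    · obtain ⟨Γ, hΓ⟩ := h
      exact ⟨.top, fun Δ => iff_of_true MCS.top_mem (hconst Γ Δ hΓ)⟩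
    · refine ⟨.neg .top, fun Δ => iff_of_false ?_ (not_exists.1 h Δ)⟩
      exact fun htop => MCS.neg_mem_iff.1 htop MCS.top_mem
  | cons φ L ih =>
    -- `P` is invariant under agreement on `L` once the truth value of `φ` is fixed.
    have exists_of_fixed (b : Prop) : ∃ χ : Formula Ag, ∀ Γ : MCS Ag,
        χ ∈ Γ ↔ ∃ Δ, AgreeOn L Δ Γ ∧ (φ ∈ Δ ↔ b) ∧ P Δ :=
      ih fun Γ Δ h ⟨Θ, hΘ, hb⟩ => ⟨Θ, hΘ.trans h, hb⟩
    have iff_of_fixed (b : Prop) (Γ : MCS Ag) (hΓ : φ ∈ Γ ↔ b) :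
        (∃ Δ, AgreeOn L Δ Γ ∧ (φ ∈ Δ ↔ b) ∧ P Δ) ↔ P Γ :=
      ⟨fun ⟨Δ, hΔ, hb, h⟩ => hP Δ Γ (hΔ.cons (hb.trans hΓ.symm)) h,
        fun h => ⟨Γ, .refl L Γ, hΓ, h⟩⟩
    obtain ⟨χ₁, hχ₁⟩ := exists_of_fixed True
    obtain ⟨χ₂, hχ₂⟩ := exists_of_fixed False
    refine ⟨(φ.impl χ₁).and (φ.neg.impl χ₂), fun Γ => ?_⟩
    rw [MCS.and_mem_iff, MCS.impl_mem_iff, MCS.impl_mem_iff, MCS.neg_mem_iff, hχ₁, hχ₂]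
    by_cases hφ : φ ∈ Γ
    · simp only [hφ, iff_of_fixed True Γ (iff_true_intro hφ), forall_const, not_true_eq_false,
        IsEmpty.forall_iff, and_true]
    · simp only [hφ, iff_of_fixed False Γ (iff_false_intro hφ), forall_const, not_false_eq_true,
        IsEmpty.forall_iff, true_and]

/-- The smallest filtration through `L` of the canonical accessibility relation.  It relates the
maximal consistent sets themselves, in place of their classes under `AgreeOn L`. -/
def FilteredAccessible (L : List (Formula Ag)) (m : Modality Ag) (Γ Δ : MCS Ag) : Prop :=
  ∃ Γ' Δ', AgreeOn L Γ Γ' ∧ AgreeOn L Δ' Δ ∧ Accessible m Γ' Δ'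

namespace FilteredAccessible

variable {L : List (Formula Ag)} {m n : Modality Ag} {Γ Δ : MCS Ag}

theorem symm (h : FilteredAccessible L m Γ Δ) : FilteredAccessible L m Δ Γ :=
  let ⟨Γ', Δ', hΓ, hΔ, hacc⟩ := h
  ⟨Δ', Γ', hΔ.symm, hΓ.symm, hacc.symm⟩

theorem of_abilities_subset (h : FilteredAccessible L n Γ Δ) (hmn : m.abilities ⊆ n.abilities) :
    FilteredAccessible L m Γ Δ :=
  let ⟨Γ', Δ', hΓ, hΔ, hacc⟩ := h
  ⟨Γ', Δ', hΓ, hΔ, hacc.of_abilities_subset hmn⟩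

theorem of_accessible (h : Accessible m Γ Δ) : FilteredAccessible L m Γ Δ :=
  ⟨Γ, Δ, .refl L Γ, .refl L Δ, h⟩

end FilteredAccessible

/-! ### The canonical similarity model -/

/-- States of the canonical model: paths of modalities and maximal consistent sets from a fixed
root, last step first.  A step need not respect accessibility; one that does not is simply not an
edge. -/
abbrev Path (Ag : Type) : Type := List (Modality Ag × MCS Ag)

/-- The endpoint of a path from the root `Γ₀`. -/
def endpoint (Γ₀ : MCS Ag) : Path Ag → MCS Ag
  | [] => Γ₀
  | (_, Γ) :: _ => Γ

/-- `w'` extends `w` by one filtered accessibility step along `m`. -/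
def Extends (L : List (Formula Ag)) (Γ₀ : MCS Ag) (m : Modality Ag) (w w' : Path Ag) : Prop :=
  ∃ Δ, w' = (m, Δ) :: w ∧ FilteredAccessible L m (endpoint Γ₀ w) Δ

/-- The edges of the canonical model: one path extends the other along `m`. -/
def Edge (L : List (Formula Ag)) (Γ₀ : MCS Ag) (m : Modality Ag) (w w' : Path Ag) : Prop :=
  Extends L Γ₀ m w w' ∨ Extends L Γ₀ m w' w

variable {L : List (Formula Ag)} {Γ₀ : MCS Ag} {m n : Modality Ag} {w w' : Path Ag}

theorem Extends.length_lt (h : Extends L Γ₀ m w w') : w.length < w'.length := by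
  obtain ⟨Δ, rfl, -⟩ := h
  simp

theorem Extends.modality_unique (hm : Extends L Γ₀ m w w') (hn : Extends L Γ₀ n w w') :
    m = n := by
  obtain ⟨Δ, rfl, -⟩ := hm
  obtain ⟨Δ', heq, -⟩ := hn
  exact congrArg Prod.fst (List.cons.inj heq).1

theorem Extends.filteredAccessible (h : Extends L Γ₀ m w w') :
    FilteredAccessible L m (endpoint Γ₀ w) (endpoint Γ₀ w') := by
  obtain ⟨Δ, rfl, hacc⟩ := h
  exact hacc

theorem Edge.symm (h : Edge L Γ₀ m w w') : Edge L Γ₀ m w' w :=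
  Or.symm h

theorem Edge.modality_unique (hm : Edge L Γ₀ m w w') (hn : Edge L Γ₀ n w w') : m = n := by
  rcases hm with hm | hm <;> rcases hn with hn | hn
  · exact hm.modality_unique hn
  · exact absurd hm.length_lt hn.length_lt.not_gt
  · exact absurd hm.length_lt hn.length_lt.not_gt
  · exact hm.modality_unique hn

theorem Edge.filteredAccessible (h : Edge L Γ₀ m w w') :
    FilteredAccessible L m (endpoint Γ₀ w) (endpoint Γ₀ w') :=
  h.elim Extends.filteredAccessible fun h => h.filteredAccessible.symm

/-- The abilities for which two paths are similar in the canonical model. -/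
def similarity (L : List (Formula Ag)) (Γ₀ : MCS Ag) (w w' : Path Ag) : Set (Finset Ag) :=
  {T | ∃ m : Modality Ag, T ∈ m.abilities ∧ Edge L Γ₀ m w w'}

theorem similarity_comm (w w' : Path Ag) : similarity L Γ₀ w w' = similarity L Γ₀ w' w :=
  Set.ext fun _ => exists_congr fun _ => and_congr_right fun _ => ⟨Edge.symm, Edge.symm⟩

theorem similarity_ne_univ (w w' : Path Ag) : similarity L Γ₀ w w' ≠ Set.univ := by
  rw [Set.ne_univ_iff_exists_notMem]
  exact ⟨∅, fun ⟨m, hm, _⟩ => m.empty_notMem_abilities hm⟩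

theorem filteredAccessible_of_abilities_subset (h : m.abilities ⊆ similarity L Γ₀ w w') :
    FilteredAccessible L m (endpoint Γ₀ w) (endpoint Γ₀ w') := by
  obtain ⟨T, hT⟩ := m.abilities_nonempty
  obtain ⟨n, -, hn⟩ := h hT
  have hmn : m.abilities ⊆ n.abilities := fun S hS => by
    obtain ⟨n', hS', hn'⟩ := h hS
    rwa [hn.modality_unique hn']
  exact hn.filteredAccessible.of_abilities_subset hmn

theorem abilities_subset_similarity_cons {Δ : MCS Ag}
    (h : FilteredAccessible L m (endpoint Γ₀ w) Δ) :
    m.abilities ⊆ similarity L Γ₀ w ((m, Δ) :: w) :=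
  fun _ hT => ⟨m, hT, .inl ⟨Δ, rfl, h⟩⟩

/-- The canonical similarity model: the unravelling from `Γ₀` of the filtration through `L`. -/
def canonicalModel (L : List (Formula Ag)) (Γ₀ : MCS Ag) : SimModel Ag where
  W := Path Ag
  A := Finset Ag
  w_nonempty := ⟨[]⟩
  E := similarity L Γ₀
  Cap := capability
  val w := {p | .atom p ∈ endpoint Γ₀ w}
  positivity w w' h := absurd h (similarity_ne_univ w w')
  symmetry := similarity_comm

/-! ### The truth lemma -/

theorem forall_similar_mem_iff_of_box_mem_iff (hφ : φ ∈ L) (hψ : ψ ∈ L)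
    (hbox : ∀ Γ : MCS Ag, m.box φ ∈ Γ ↔ ψ ∈ Γ) :
    (∀ w', m.abilities ⊆ similarity L Γ₀ w w' → φ ∈ endpoint Γ₀ w') ↔ ψ ∈ endpoint Γ₀ w := by
  constructor
  · intro h
    by_contra hψw
    obtain ⟨Δ, hacc, hφΔ⟩ := exists_accessible_notMem (mt (hbox _).1 hψw)
    exact hφΔ (h _ (abilities_subset_similarity_cons (.of_accessible hacc)))
  · intro hψw w' hw'
    obtain ⟨Γ, Δ, hΓ, hΔ, hacc⟩ := filteredAccessible_of_abilities_subset hw'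
    exact (hΔ φ hφ).1 (hacc φ ((hbox Γ).2 ((hΓ ψ hψ).1 hψw)))

/-- One step of the chains that interpret `C_G` in the canonical model. -/
def GroupStep (L : List (Formula Ag)) (Γ₀ : MCS Ag) (G : Finset Ag) (w w' : Path Ag) : Prop :=
  ∃ a ∈ G, capability a ⊆ similarity L Γ₀ w w'

variable {G : Finset Ag} {hG : G.Nonempty}

theorem GroupStep.mem_and_C_mem (h : GroupStep L Γ₀ G w w') (hφ : φ ∈ L)
    (hC : .C G hG φ ∈ L) (hw : .C G hG φ ∈ endpoint Γ₀ w) :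
    φ ∈ endpoint Γ₀ w' ∧ .C G hG φ ∈ endpoint Γ₀ w' := by
  obtain ⟨a, ha, hsim⟩ := h
  rw [← Modality.abilities_K] at hsim
  obtain ⟨Γ, Δ, hΓ, hΔ, hacc⟩ := filteredAccessible_of_abilities_subset hsim
  have hK : .K a (φ.and (.C G hG φ)) ∈ Γ := MCS.K_mem_of_C_mem ha ((hΓ _ hC).1 hw)
  have hand := MCS.and_mem_iff.1 (hacc _ (Modality.box_K_mem_iff.2 hK))
  exact ⟨(hΔ φ hφ).1 hand.1, (hΔ _ hC).1 hand.2⟩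

theorem mem_of_C_mem_of_transGen (hφ : φ ∈ L) (hC : .C G hG φ ∈ L)
    (hw : .C G hG φ ∈ endpoint Γ₀ w) (h : Relation.TransGen (GroupStep L Γ₀ G) w w') :
    φ ∈ endpoint Γ₀ w' := by
  suffices φ ∈ endpoint Γ₀ w' ∧ .C G hG φ ∈ endpoint Γ₀ w' from this.1
  induction h with
  | single hstep => exact hstep.mem_and_C_mem hφ hC hw
  | tail _ hstep ih => exact hstep.mem_and_C_mem hφ hC ih.2

theorem exists_formula_mem_iff_reachable (L : List (Formula Ag)) (Γ₀ : MCS Ag) (G : Finset Ag)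
    (w : Path Ag) : ∃ χ : Formula Ag, ∀ Θ : MCS Ag, χ ∈ Θ ↔
      ∃ w', AgreeOn L (endpoint Γ₀ w') Θ ∧ Relation.ReflTransGen (GroupStep L Γ₀ G) w w' :=
  exists_formula_mem_iff_of_agreeOn L fun _ _ h ⟨w', hw', hreach⟩ => ⟨w', hw'.trans h, hreach⟩

theorem C_mem_of_forall_transGen (hG : G.Nonempty)
    (h : ∀ w', Relation.TransGen (GroupStep L Γ₀ G) w w' → φ ∈ endpoint Γ₀ w') :
    .C G hG φ ∈ endpoint Γ₀ w := by
  obtain ⟨χ, hχ⟩ := exists_formula_mem_iff_reachable L Γ₀ G w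
  have hK (Θ : MCS Ag) (hΘ : χ ∈ Θ) (a : Ag) (ha : a ∈ G) : .K a (χ.and φ) ∈ Θ := by
    obtain ⟨u, hu, hreach⟩ := (hχ Θ).1 hΘ
    by_contra hKΘ
    obtain ⟨Δ, hacc, hΔ⟩ := exists_accessible_notMem (mt Modality.box_K_mem_iff.1 hKΘ)
    have hstep : GroupStep L Γ₀ G u ((.K a, Δ) :: u) := by
      refine ⟨a, ha, ?_⟩
      rw [← Modality.abilities_K]
      exact abilities_subset_similarity_cons ⟨Θ, Δ, hu, .refl L Δ, hacc⟩
    have hχΔ : χ ∈ Δ := (hχ Δ).2 ⟨(.K a, Δ) :: u, .refl L Δ, hreach.tail hstep⟩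
    have hφΔ : φ ∈ Δ := h _ (.tail' hreach hstep)
    exact hΔ (MCS.and_mem_iff.2 ⟨hχΔ, hφΔ⟩)
  have hprov : Prov (χ.impl (.C G hG φ)) :=
    .c2 G hG (prov_of_forall_mem fun Θ =>
      MCS.impl_mem_iff.2 fun hΘ => MCS.bigConj_mem_iff.2 (hK Θ hΘ))
  exact MCS.mem_of_prov_impl hprov ((hχ _).2 ⟨w, .refl L _, .refl⟩)

theorem canonicalModel_sat_iff (hL : φ.subformulas ⊆ L) (w : Path Ag) :
    (canonicalModel L Γ₀).sat w φ ↔ φ ∈ endpoint Γ₀ w := by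
  induction φ generalizing w with
  | atom p => rfl
  | neg φ ih => exact (not_congr (ih (List.cons_subset.1 hL).2 w)).trans MCS.neg_mem_iff.symm
  | impl φ ψ ihφ ihψ =>
    obtain ⟨hφ, hψ⟩ := List.append_subset.1 (List.cons_subset.1 hL).2
    exact (imp_congr (ihφ hφ w) (ihψ hψ w)).trans MCS.impl_mem_iff.symm
  | K a φ ih =>
    obtain ⟨hK, hφ⟩ := List.cons_subset.1 hL
    rw [← forall_similar_mem_iff_of_box_mem_iff (hφ φ.mem_subformulas_self) hK
      fun _ => Modality.box_K_mem_iff, Modality.abilities_K]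
    exact forall₂_congr fun w' _ => ih hφ w'
  | C G hG φ ih =>
    obtain ⟨hC, hφ⟩ := List.cons_subset.1 hL
    refine (forall₂_congr fun w' _ => ih hφ w').trans ⟨C_mem_of_forall_transGen hG, ?_⟩
    exact fun hCw _ => mem_of_C_mem_of_transGen (hφ φ.mem_subformulas_self) hC hCw
  | D G hG φ ih =>
    obtain ⟨hD, hφ⟩ := List.cons_subset.1 hL
    exact (forall₂_congr fun w' _ => ih hφ w').trans (forall_similar_mem_iff_of_box_mem_iff
      (m := .D G hG) (hφ φ.mem_subformulas_self) hD fun _ => .rfl)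
  | F G hG φ ih =>
    obtain ⟨hF, hφ⟩ := List.cons_subset.1 hL
    exact (forall₂_congr fun w' _ => ih hφ w').trans (forall_similar_mem_iff_of_box_mem_iff
      (m := .F G hG) (hφ φ.mem_subformulas_self) hF fun _ => .rfl)

end ELCDF

theorem stmt_19_general {Ag : Type} {φ : Formula Ag} (h : Valid φ) : Prov φ :=
  ELCDF.prov_of_forall_mem fun Γ =>
    (ELCDF.canonicalModel_sat_iff (List.Subset.refl φ.subformulas) []).1
      (h (ELCDF.canonicalModel φ.subformulas Γ) [])

/-- weak completeness of ELCDF: every ELCDF-formula valid on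
similarity models is a theorem of the axiomatic system ELCDF. -/
theorem stmt_19 {Ag : Type} [Fintype Ag] [Nonempty Ag]
    (φ : Formula Ag) (h : ∀ (M : SimModel Ag) (s : M.W), M.sat s φ) :
    Prov φ :=
  stmt_19_general h
end
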